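/- arXiv:1511.01132 — 3 statements merged into one kernel-verified Lean document; each statement's English description precedes it below -/
import Mathlib

section
/- (Second price deviation lemma) In a simultaneous second price auction, fix a set S ⊆ [m] and a bidder i with a fractionally subadditive valuation v_i, budget B_i ≥ 0, and v_i(S) > 0, and let a_r be an additive valuation from i's XOS family that is maximizing for S (v_i(S) = Σ_{j∈S} a_r({j})). Define the deviation b*_i by b*_{ij} = a_r({j}) · min{v_i(S), B_i} / v_i(S) for j ∈ S and b*_{ij} = 0 for j ∉ S. Then for every profile b_{-i} of the other bidders' bids, u_i(b*_i, b_{-i}) ≥ min{v_i(S), B_i} − Σ_{j∈S} max_{k≠i} b_{kj}. -/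
/-!
Second price deviation lemma: in a simultaneous second price auction, a bidder
`i` with XOS valuation deviating to `b*_{ij} = a_r(j) · min{v_i(S), B_i}/v_i(S)`
on items of `S` (and `0` elsewhere) derives utility at least
`min{v_i(S), B_i} − Σ_{j∈S} max_{k≠i} b_{kj}`.
-/

open Finset

/-- `v` is fractionally subadditive (XOS): the pointwise maximum of a finite
nonempty family of (nonnegative) additive valuations. -/
def IsXOS {m : ℕ} (v : Finset (Fin m) → ℝ) : Prop :=
  ∃ (k : ℕ) (a : Fin (k + 1) → Fin m → ℝ),
    (∀ t j, 0 ≤ a t j) ∧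
    ∀ S : Finset (Fin m),
      v S = (Finset.univ : Finset (Fin (k + 1))).sup'
        ⟨0, Finset.mem_univ 0⟩ (fun t => ∑ j ∈ S, a t j)

/-- A simultaneous second price auction on `m` indivisible items with `n` bidders:
monotone normalized valuations `v i`, budgets `B i ≥ 0`, and a deterministic
allocation rule `win` awarding every item to a bidder with the highest bid on it;
the winner of an item pays the highest competing bid on it. -/
structure ItemAuctionSP (n m : ℕ) where
  v : Fin n → Finset (Fin m) → ℝ
  v_empty : ∀ i, v i ∅ = 0
  v_mono : ∀ i (S T : Finset (Fin m)), S ⊆ T → v i S ≤ v i T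
  B : Fin n → ℝ
  B_nonneg : ∀ i, 0 ≤ B i
  win : (Fin n → Fin m → ℝ) → Fin m → Fin n
  win_max : ∀ (b : Fin n → Fin m → ℝ) (j : Fin m) (i : Fin n), b i j ≤ b (win b j) j
  win_strict : ∀ (b : Fin n → Fin m → ℝ) (j : Fin m) (i : Fin n),
    (∀ k, k ≠ i → b k j < b i j) → win b j = i

namespace ItemAuctionSP

variable {n m : ℕ}

/-- The highest competing bid `max_{k ≠ i} b_{kj}` (bids are nonnegative). -/
noncomputable def maxOther (b : Fin n → Fin m → ℝ) (i : Fin n) (j : Fin m) : ℝ :=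
  Finset.fold max 0 (fun k => b k j) (univ.erase i)

/-- The set of items bidder `i` wins under profile `b`. -/
def won (A : ItemAuctionSP n m) (i : Fin n) (b : Fin n → Fin m → ℝ) : Finset (Fin m) :=
  univ.filter fun j => A.win b j = i

/-- Second-price payment of bidder `i`: the highest competing bid on each item won. -/
noncomputable def pay (A : ItemAuctionSP n m) (i : Fin n) (b : Fin n → Fin m → ℝ) : ℝ :=
  ∑ j ∈ A.won i b, maxOther b i j

/-- Quasilinear utility of bidder `i`. -/
noncomputable def util (A : ItemAuctionSP n m) (i : Fin n) (b : Fin n → Fin m → ℝ) : ℝ :=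
  A.v i (A.won i b) - A.pay i b

/-- Liquid Welfare of a pure bid profile. -/
noncomputable def LW (A : ItemAuctionSP n m) (b : Fin n → Fin m → ℝ) : ℝ :=
  ∑ i, min (A.v i (A.won i b)) (A.B i)

/-- No over-bidding: `Σ_{j∈S} b_{ij} ≤ v_i(S)` for every set `S`. -/
def NoOverbid (A : ItemAuctionSP n m) (i : Fin n) (bi : Fin m → ℝ) : Prop :=
  ∀ S : Finset (Fin m), ∑ j ∈ S, bi j ≤ A.v i S

/-- No over-budgeting: bids sum to at most the budget. -/
def NoOverbudget (A : ItemAuctionSP n m) (i : Fin n) (bi : Fin m → ℝ) : Prop :=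
  (∑ j : Fin m, bi j) ≤ A.B i

end ItemAuctionSP

/-- **Second price deviation lemma.**  `a` is an additive valuation from bidder
`i`'s XOS family (`∀ T, Σ_{j∈T} a j ≤ v_i(T)`) maximizing for `S`
(`v_i(S) = Σ_{j∈S} a j`).  Deviating to
`b*_{ij} = a j · min{v_i(S), B_i}/v_i(S)` on `j ∈ S` (and `0` elsewhere)
guarantees `u_i(b*, b_{-i}) ≥ min{v_i(S), B_i} − Σ_{j∈S} max_{k≠i} b_{kj}`. -/
theorem second_price_deviation_lemma {n m : ℕ} (A : ItemAuctionSP n m)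
    (i : Fin n) (S : Finset (Fin m))
    (a : Fin m → ℝ) (ha_nonneg : ∀ j, 0 ≤ a j)
    (ha_dom : ∀ T : Finset (Fin m), ∑ j ∈ T, a j ≤ A.v i T)
    (ha_max : A.v i S = ∑ j ∈ S, a j)
    (hvS : 0 < A.v i S)
    (b : Fin n → Fin m → ℝ) (hb_nonneg : ∀ k j, 0 ≤ b k j)
    (bstar : Fin m → ℝ)
    (hbstar : ∀ j, bstar j =
      if j ∈ S then a j * min (A.v i S) (A.B i) / A.v i S else 0) :
    A.util i (Function.update b i bstar) ≥
      min (A.v i S) (A.B i) - ∑ j ∈ S, ItemAuctionSP.maxOther b i j := by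
  have hmin0 : 0 ≤ min (A.v i S) (A.B i) := le_min hvS.le (A.B_nonneg i)
  have hs0 : ∀ j, 0 ≤ bstar j := by
    intro j
    rw [hbstar]
    split_ifs
    · exact div_nonneg (mul_nonneg (ha_nonneg j) hmin0) hvS.le
    · exact le_rfl
  have hsa : ∀ j, bstar j ≤ a j := by
    intro j
    rw [hbstar]
    split_ifs
    · rw [div_le_iff₀ hvS]
      exact mul_le_mul_of_nonneg_left (min_le_left _ _) (ha_nonneg j)
    · exact ha_nonneg j
  have hsum : ∑ j ∈ S, bstar j = min (A.v i S) (A.B i) := by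
    have h1 : ∑ j ∈ S, bstar j = ∑ j ∈ S, a j * (min (A.v i S) (A.B i) / A.v i S) := by
      refine Finset.sum_congr rfl fun j hj => ?_
      rw [hbstar, if_pos hj, mul_div_assoc]
    rw [h1, ← Finset.sum_mul, ← ha_max]
    field_simp
  have hM : ∀ j, ItemAuctionSP.maxOther (Function.update b i bstar) i j
      = ItemAuctionSP.maxOther b i j := by
    intro j
    unfold ItemAuctionSP.maxOther
    refine Finset.fold_congr fun k hk => ?_
    rw [Function.update_of_ne (Finset.ne_of_mem_erase hk)]
  have hwin : ∀ j, A.win (Function.update b i bstar) j = i →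
      ItemAuctionSP.maxOther b i j ≤ bstar j := by
    intro j hj
    unfold ItemAuctionSP.maxOther
    rw [Finset.fold_max_le]
    refine ⟨hs0 j, fun k hk => ?_⟩
    have h := A.win_max (Function.update b i bstar) j k
    rwa [hj, Function.update_self, Function.update_of_ne (Finset.ne_of_mem_erase hk)] at h
  have hlose : ∀ j, A.win (Function.update b i bstar) j ≠ i →
      bstar j ≤ ItemAuctionSP.maxOther b i j := by
    intro j hj
    have h := A.win_max (Function.update b i bstar) j i
    rw [Function.update_self, Function.update_of_ne hj] at h
    unfold ItemAuctionSP.maxOther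
    rw [Finset.le_fold_max]
    exact Or.inr ⟨_, Finset.mem_erase.2 ⟨hj, Finset.mem_univ _⟩, h⟩
  have hdom := ha_dom (A.won i (Function.update b i bstar))
  have key : ∑ j ∈ S, (bstar j - ItemAuctionSP.maxOther b i j) ≤
      ∑ j ∈ A.won i (Function.update b i bstar), (a j - ItemAuctionSP.maxOther b i j) := by
    unfold ItemAuctionSP.won
    rw [Finset.sum_filter, ← Finset.sum_filter_add_sum_filter_not Finset.univ (· ∈ S)
      (fun j => if A.win (Function.update b i bstar) j = i
        then a j - ItemAuctionSP.maxOther b i j else 0)]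
    rw [Finset.filter_univ_mem]
    have hA : ∑ j ∈ S, (bstar j - ItemAuctionSP.maxOther b i j) ≤
        ∑ j ∈ S, (if A.win (Function.update b i bstar) j = i
          then a j - ItemAuctionSP.maxOther b i j else 0) := by
      refine Finset.sum_le_sum fun j _ => ?_
      split_ifs with h
      · linarith [hsa j]
      · linarith [hlose j h]
    have hB : 0 ≤ ∑ j ∈ Finset.univ.filter (fun j => ¬ j ∈ S),
        (if A.win (Function.update b i bstar) j = i
          then a j - ItemAuctionSP.maxOther b i j else 0) := by
      refine Finset.sum_nonneg fun j _ => ?_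
      split_ifs with h
      · linarith [hsa j, hwin j h]
      · exact le_rfl
    linarith
  rw [Finset.sum_sub_distrib, Finset.sum_sub_distrib, hsum] at key
  unfold ItemAuctionSP.util ItemAuctionSP.pay
  simp only [hM]
  linarith
end

section
/- For every integer n ≥ 5 there exist a simultaneous first price auction with n bidders, n indivisible items, additive valuations, budgets, and a deterministic tie-breaking rule, together with a mixed Nash equilibrium σ, such that OPT ≥ (n/2) · LW(σ); that is, with a deterministic tie-breaking rule the Liquid Price of Anarchy over mixed Nash equilibria is Ω(n). -/
/-!
With a deterministic tie-breaking rule, there are simultaneous first price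
auction games (with indivisible items, additive valuations and budgets) whose
mixed Nash equilibria have Liquid Price of Anarchy `Ω(n)`: for every `n ≥ 5`
there is such a game with `n` bidders and `n` items and a mixed Nash equilibrium
`σ` with `OPT ≥ (n/2) · LW(σ)`.
-/

open Finset

/-- A simultaneous first price auction on `m` indivisible items with `n` additive
budgeted bidders and a deterministic tie-breaking rule: each item with a positive
bid is awarded to a bidder with the highest bid on it, items with all-zero bids
remain unallocated, and each winner pays her own bid. -/
structure DetAuction (n m : ℕ) where
  v : Fin n → Fin m → ℝ
  v_nonneg : ∀ i j, 0 ≤ v i j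
  B : Fin n → ℝ
  B_nonneg : ∀ i, 0 ≤ B i
  win : (Fin n → Fin m → ℝ) → Fin m → Option (Fin n)
  win_max : ∀ (b : Fin n → Fin m → ℝ) (j : Fin m) (i : Fin n),
    win b j = some i → ∀ k, b k j ≤ b i j
  win_pos : ∀ (b : Fin n → Fin m → ℝ) (j : Fin m), (∃ i, 0 < b i j) → (win b j).isSome
  win_zero : ∀ (b : Fin n → Fin m → ℝ) (j : Fin m), (∀ i, b i j = 0) → win b j = none

namespace DetAuction

variable {n m : ℕ}

/-- Value bidder `i` derives under profile `b`. -/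
noncomputable def val (A : DetAuction n m) (i : Fin n) (b : Fin n → Fin m → ℝ) : ℝ :=
  ∑ j : Fin m, if A.win b j = some i then A.v i j else 0

/-- First-price payment of bidder `i`. -/
noncomputable def pay (A : DetAuction n m) (i : Fin n) (b : Fin n → Fin m → ℝ) : ℝ :=
  ∑ j : Fin m, if A.win b j = some i then b i j else 0

/-- Quasilinear utility of bidder `i`. -/
noncomputable def util (A : DetAuction n m) (i : Fin n) (b : Fin n → Fin m → ℝ) : ℝ :=
  A.val i b - A.pay i b

end DetAuction

/-- A mixed bid profile: a product distribution, bidder `i` placing probability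
`p i k` on the (nonnegative) bid vector `β i k`, with finite support `Fin (K i)`. -/
structure MixedProfile (n m : ℕ) where
  K : Fin n → ℕ
  p : ∀ i, Fin (K i) → ℝ
  p_nonneg : ∀ i k, 0 ≤ p i k
  p_sum : ∀ i, ∑ k, p i k = 1
  β : ∀ i, Fin (K i) → Fin m → ℝ
  β_nonneg : ∀ i k j, 0 ≤ β i k j

namespace MixedProfile

variable {n m : ℕ}

/-- Probability of a sample point of the product distribution. -/
noncomputable def prob (σ : MixedProfile n m) (ω : ∀ i, Fin (σ.K i)) : ℝ :=
  ∏ i, σ.p i (ω i)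

/-- The pure bid profile realized at sample point `ω`. -/
def bids (σ : MixedProfile n m) (ω : ∀ i, Fin (σ.K i)) : Fin n → Fin m → ℝ :=
  fun i => σ.β i (ω i)

end MixedProfile

/-- `σ` is a mixed Nash equilibrium: payments stay within budgets almost surely,
and no bidder can profit in expectation by deviating to any deterministic
nonnegative bid vector whose bids sum to at most her budget. -/
def IsMixedNash {n m : ℕ} (A : DetAuction n m) (σ : MixedProfile n m) : Prop :=
  (∀ i (ω : ∀ i, Fin (σ.K i)), σ.prob ω ≠ 0 → A.pay i (σ.bids ω) ≤ A.B i) ∧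
  ∀ i (b' : Fin m → ℝ), (∀ j, 0 ≤ b' j) → (∑ j : Fin m, b' j) ≤ A.B i →
    (∑ ω : ∀ i, Fin (σ.K i), σ.prob ω * A.util i (σ.bids ω)) ≥
      ∑ ω : ∀ i, Fin (σ.K i), σ.prob ω * A.util i (Function.update (σ.bids ω) i b')

/-- Expected Liquid Welfare of a mixed profile. -/
noncomputable def LW {n m : ℕ} (A : DetAuction n m) (σ : MixedProfile n m) : ℝ :=
  ∑ i, ∑ ω : ∀ i, Fin (σ.K i), σ.prob ω * min (A.val i (σ.bids ω)) (A.B i)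

namespace LPoA

/-- Deterministic winner of one item from the bids `c` on that item: among the highest
bidders, the bidder `i` encoded by the bid of bidder `0`, namely `i/(m+1)` is preferred. -/
theorem exists_winner (m : ℕ) (c : Fin (m + 1) → ℝ) :
    ∃ w : Option (Fin (m + 1)),
      (∀ i, w = some i → ∀ k, c k ≤ c i) ∧
      ((∃ i, 0 < c i) → w.isSome) ∧
      ((∀ i, c i = 0) → w = none) ∧
      (∀ i : Fin (m + 1), 0 < c i → (∀ k, c k ≤ c i) →
        c 0 = (i : ℝ) / ((m : ℝ) + 1) → w = some i) := by
  have hm : (0 : ℝ) < (m : ℝ) + 1 := by positivity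
  by_cases h0 : ∀ i, c i = 0
  · refine ⟨none, by simp, ?_, by simp, ?_⟩
    · rintro ⟨i, hi⟩
      simp [h0 i] at hi
    · intro i hi
      simp [h0 i] at hi
  · by_cases h1 : ∃ i : Fin (m + 1), 0 < c i ∧ (∀ k, c k ≤ c i) ∧
        c 0 = (i : ℝ) / ((m : ℝ) + 1)
    · obtain ⟨i, hi, hmax, he⟩ := h1
      refine ⟨some i, ?_, by simp, fun h => absurd h h0, ?_⟩
      · rintro i' hi'
        simp only [Option.some.injEq] at hi'
        subst hi'
        exact hmax
      · intro i' _ _ he'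
        rw [he, div_left_inj' hm.ne'] at he'
        congr 1
        exact Fin.ext (by exact_mod_cast he')
    · obtain ⟨i, hi⟩ := Finite.exists_max c
      refine ⟨some i, ?_, by simp, fun h => absurd h h0, ?_⟩
      · rintro i' hi'
        simp only [Option.some.injEq] at hi'
        subst hi'
        exact hi
      · intro i' a b c
        exact absurd ⟨i', a, b, c⟩ h1

/-- The auction: bidder `0` values nothing; every other bidder `i` values item `0` at `m+2`
and item `i` at `1`.  All budgets are `1`. -/
noncomputable def auction (m : ℕ) : DetAuction (m + 1) (m + 1) where
  v i j := if i = 0 then 0 else if j = 0 then (m : ℝ) + 2 else if j = i then 1 else 0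
  v_nonneg i j := by
    split_ifs <;> first | exact le_rfl | positivity
  B _ := 1
  B_nonneg _ := zero_le_one
  win b j := (exists_winner m (fun i => b i j)).choose
  win_max b j := (exists_winner m (fun i => b i j)).choose_spec.1
  win_pos b j := (exists_winner m (fun i => b i j)).choose_spec.2.1
  win_zero b j := (exists_winner m (fun i => b i j)).choose_spec.2.2.1

theorem win_tie (m : ℕ) (b : Fin (m + 1) → Fin (m + 1) → ℝ) (j i : Fin (m + 1))
    (h1 : 0 < b i j) (h2 : ∀ k, b k j ≤ b i j) (h3 : b 0 j = (i : ℝ) / ((m : ℝ) + 1)) :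
    (auction m).win b j = some i :=
  (exists_winner m (fun i => b i j)).choose_spec.2.2.2 i h1 h2 h3

/-- Everybody but bidder `0` bids `1` on item `0`; bidder `0` bids a uniformly random
multiple of `1/(m+1)` on item `0`, always strictly below `1`. -/
noncomputable def profile (m : ℕ) : MixedProfile (m + 1) (m + 1) where
  K _ := m + 1
  p _ _ := 1 / ((m : ℝ) + 1)
  p_nonneg _ _ := by positivity
  p_sum _ := by
    have : (m : ℝ) + 1 ≠ 0 := by positivity
    simp [this]
  β i k j := if j = 0 then (if i = 0 then (k : ℝ) / ((m : ℝ) + 1) else 1) else 0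
  β_nonneg i k j := by split_ifs <;> positivity

theorem exp_coord (m : ℕ) (f : Fin (m + 1) → ℝ) :
    ∑ ω : ∀ i, Fin ((profile m).K i), (profile m).prob ω * f (ω 0)
      = ∑ k : Fin (m + 1), 1 / ((m : ℝ) + 1) * f k := by
  have hm : (m : ℝ) + 1 ≠ 0 := by positivity
  have key := Finset.prod_univ_sum (fun _ : Fin (m + 1) => (univ : Finset (Fin (m + 1))))
    (fun i k => 1 / ((m : ℝ) + 1) * (if i = 0 then f k else 1))
  rw [Fintype.piFinset_univ] at key
  have e1 : ∀ ω : Fin (m + 1) → Fin (m + 1),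
      ∏ i, (1 / ((m : ℝ) + 1) * (if i = 0 then f (ω i) else 1))
        = (profile m).prob ω * f (ω 0) := by
    intro ω
    rw [Finset.prod_mul_distrib, Finset.prod_ite_eq' univ 0 (fun i => f (ω i))]
    simp [MixedProfile.prob, profile]
  simp only [e1] at key
  refine key.symm.trans ?_
  rw [Fin.prod_univ_succ]
  have e2 : ∏ i : Fin m, ∑ k : Fin (m + 1),
      1 / ((m : ℝ) + 1) * (if i.succ = 0 then f k else 1) = 1 := by
    apply Finset.prod_eq_one
    intro i _
    simp [Fin.succ_ne_zero, hm]
  rw [e2]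
  simp

theorem prob_nonneg (m : ℕ) (ω : ∀ i, Fin ((profile m).K i)) : 0 ≤ (profile m).prob ω :=
  Finset.prod_nonneg fun i _ => (profile m).p_nonneg i _

theorem prob_sum (m : ℕ) : ∑ ω : ∀ i, Fin ((profile m).K i), (profile m).prob ω = 1 := by
  have hm : (m : ℝ) + 1 ≠ 0 := by positivity
  have := exp_coord m (fun _ => 1)
  simpa [hm] using this

theorem coin_lt (m : ℕ) (k : Fin (m + 1)) : (k : ℝ) / ((m : ℝ) + 1) < 1 := by
  rw [div_lt_one (by positivity)]
  exact_mod_cast k.isLt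

/-- Item `j ≠ 0` is never allocated in equilibrium. -/
theorem win_other (m : ℕ) (ω : ∀ i, Fin ((profile m).K i)) (j : Fin (m + 1)) (hj : j ≠ 0) :
    (auction m).win ((profile m).bids ω) j = none := by
  apply (auction m).win_zero
  intro i
  simp [MixedProfile.bids, profile, hj]

theorem bid_zero_item (m : ℕ) (ω : ∀ i, Fin ((profile m).K i)) (i : Fin (m + 1)) (hi : i ≠ 0) :
    (profile m).bids ω i 0 = 1 := by
  simp [MixedProfile.bids, profile, hi]

theorem bid_coin (m : ℕ) (ω : ∀ i, Fin ((profile m).K i)) :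
    (profile m).bids ω 0 0 = ((ω 0 : ℕ) : ℝ) / ((m : ℝ) + 1) := by
  simp [MixedProfile.bids, profile]

/-- In equilibrium, the winner of item `0` is not bidder `0`. -/
theorem win_ne_zero (m : ℕ) (hm : 2 ≤ m) (ω : ∀ i, Fin ((profile m).K i)) :
    (auction m).win ((profile m).bids ω) 0 ≠ some 0 := by
  intro h
  have h1 : (Fin.last m) ≠ 0 := by
    intro h
    have := congrArg Fin.val h
    simp at this
    omega
  have := (auction m).win_max _ _ _ h (Fin.last m)
  rw [bid_zero_item m ω _ h1, bid_coin] at this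
  exact absurd (coin_lt m (ω 0)) (not_lt.mpr this)

theorem val_eq (m : ℕ) (ω : ∀ i, Fin ((profile m).K i)) (i : Fin (m + 1)) :
    (auction m).val i ((profile m).bids ω) =
      if (auction m).win ((profile m).bids ω) 0 = some i then (auction m).v i 0 else 0 := by
  unfold DetAuction.val
  rw [Finset.sum_eq_single 0]
  · intro j _ hj
    simp [win_other m ω j hj]
  · simp

theorem pay_eq (m : ℕ) (ω : ∀ i, Fin ((profile m).K i)) (i : Fin (m + 1)) :
    (auction m).pay i ((profile m).bids ω) =
      if (auction m).win ((profile m).bids ω) 0 = some i then (profile m).bids ω i 0 else 0 := by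
  unfold DetAuction.pay
  rw [Finset.sum_eq_single 0]
  · intro j _ hj
    simp [win_other m ω j hj]
  · simp

theorem v_zero (m : ℕ) (i : Fin (m + 1)) (hi : i ≠ 0) : (auction m).v i 0 = (m : ℝ) + 2 := by
  simp [auction, hi]

theorem win_some (m : ℕ) (hm : 2 ≤ m) (ω : ∀ i, Fin ((profile m).K i)) :
    ∃ i, i ≠ 0 ∧ (auction m).win ((profile m).bids ω) 0 = some i := by
  have h1 : (Fin.last m) ≠ 0 := by
    intro h
    have := congrArg Fin.val h
    simp at this
    omega
  have h := (auction m).win_pos ((profile m).bids ω) 0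
    ⟨Fin.last m, by rw [bid_zero_item m ω _ h1]; exact one_pos⟩
  obtain ⟨i, hi⟩ := Option.isSome_iff_exists.mp h
  refine ⟨i, ?_, hi⟩
  rintro rfl
  exact win_ne_zero m hm ω hi

/-- The equilibrium has Liquid Welfare exactly `1`; in particular the example is not degenerate. -/
theorem LW_eq (m : ℕ) (hm : 2 ≤ m) : LW (auction m) (profile m) = 1 := by
  unfold LW
  rw [Finset.sum_comm]
  rw [← prob_sum m]
  apply Finset.sum_congr rfl
  intro ω _
  rw [← Finset.mul_sum]
  obtain ⟨w, hw, hwin⟩ := win_some m hm ω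
  rw [Finset.sum_eq_single w]
  · rw [val_eq, if_pos hwin, v_zero m w hw]
    have : min ((m : ℝ) + 2) ((auction m).B w) = 1 := by
      have : (0 : ℝ) ≤ m := by positivity
      simp only [auction]
      exact min_eq_right (by linarith)
    rw [this, mul_one]
  · intro i _ hi
    rw [val_eq, if_neg]
    · simp [auction]
    · rw [hwin]
      simpa using fun h => hi h.symm
  · simp

theorem util_sum {n m : ℕ} (A : DetAuction n m) (i : Fin n) (b : Fin n → Fin m → ℝ) :
    A.util i b = ∑ j, if A.win b j = some i then A.v i j - b i j else 0 := by
  unfold DetAuction.util DetAuction.val DetAuction.pay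
  rw [← Finset.sum_sub_distrib]
  apply Finset.sum_congr rfl
  intro j _
  split_ifs <;> simp

/-- `m + 1` if the coin `k` points at bidder `i`, and `0` otherwise. -/
noncomputable def payoff (m : ℕ) (i k : Fin (m + 1)) : ℝ := if k = i then (m : ℝ) + 1 else 0

theorem nash (m : ℕ) (hm : 2 ≤ m) : IsMixedNash (auction m) (profile m) := by
  have hm0 : (0 : ℝ) ≤ m := by positivity
  constructor
  · intro i ω _
    rw [pay_eq]
    change _ ≤ (1 : ℝ)
    split_ifs with h
    · have hi : i ≠ 0 := by
        rintro rfl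
        exact win_ne_zero m hm ω h
      rw [bid_zero_item m ω i hi]
    · exact zero_le_one
  · intro i b' hb hsum
    change _ ≤ (1 : ℝ) at hsum
    by_cases hi : i = 0
    · subst hi
      have h1 : ∀ ω, (auction m).util 0 ((profile m).bids ω) = 0 := by
        intro ω
        rw [DetAuction.util, val_eq, pay_eq, if_neg (win_ne_zero m hm ω),
          if_neg (win_ne_zero m hm ω), sub_zero]
      have h2 : ∀ ω, (auction m).util 0 (Function.update ((profile m).bids ω) 0 b') ≤ 0 := by
        intro ω
        rw [util_sum]
        apply Finset.sum_nonpos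
        intro j _
        split_ifs
        · simp [auction, hb j]
        · exact le_rfl
      apply Finset.sum_le_sum
      intro ω _
      rw [h1 ω]
      exact mul_le_mul_of_nonneg_left (h2 ω) (prob_nonneg m ω)
    · by_cases hb0 : b' 0 < 1
      · -- the deviation never wins item `0`
        obtain ⟨k, hk0, hki⟩ : ∃ k : Fin (m + 1), k ≠ 0 ∧ k ≠ i := by
          by_cases h : i = ⟨1, by omega⟩
          · refine ⟨⟨2, by omega⟩, ?_, ?_⟩
            · simp [Fin.ext_iff]
            · simp [h]
          · exact ⟨⟨1, by omega⟩, by simp [Fin.ext_iff], fun h' => h h'.symm⟩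
        have h2 : ∀ ω, (auction m).util i (Function.update ((profile m).bids ω) i b') ≤ 1 := by
          intro ω
          rw [util_sum]
          have : ∀ j ∈ (univ : Finset (Fin (m + 1))),
              (if (auction m).win (Function.update ((profile m).bids ω) i b') j = some i then
                (auction m).v i j - Function.update ((profile m).bids ω) i b' i j else 0)
              ≤ if j = i then (1 : ℝ) else 0 := by
            intro j _
            by_cases hj : j = 0
            · subst hj
              rw [if_neg, if_neg (fun h => hi h.symm)]
              intro h
              have := (auction m).win_max _ _ _ h k
              rw [Function.update_of_ne hki, Function.update_self,
                bid_zero_item m ω k hk0] at this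
              linarith
            · have hv : (auction m).v i j = if j = i then (1 : ℝ) else 0 := by
                simp [auction, hi, hj]
              rw [hv, Function.update_self]
              have := hb j
              split_ifs <;> linarith
          refine (Finset.sum_le_sum this).trans ?_
          simp
        have h1 : ∀ ω : ∀ i, Fin ((profile m).K i),
            payoff m i (ω 0) ≤ (auction m).util i ((profile m).bids ω) := by
          intro ω
          rw [DetAuction.util, val_eq, pay_eq, bid_zero_item m ω i hi, v_zero m i hi]
          by_cases h : ω 0 = i
          · have hw : (auction m).win ((profile m).bids ω) 0 = some i := by
              apply win_tie
              · rw [bid_zero_item m ω i hi]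
                exact one_pos
              · intro l
                rw [bid_zero_item m ω i hi]
                by_cases hl : l = 0
                · subst hl
                  rw [bid_coin]
                  exact (coin_lt m (ω 0)).le
                · rw [bid_zero_item m ω l hl]
              · rw [bid_coin, h]
            have hp : payoff m i (ω 0) = (m : ℝ) + 1 := if_pos h
            rw [hp, if_pos hw, if_pos hw]
            linarith
          · have hp : payoff m i (ω 0) = 0 := if_neg h
            rw [hp]
            split_ifs <;> linarith
        calc ∑ ω, (profile m).prob ω *
              (auction m).util i (Function.update ((profile m).bids ω) i b')
            ≤ ∑ ω, (profile m).prob ω * 1 :=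
              Finset.sum_le_sum fun ω _ =>
                mul_le_mul_of_nonneg_left (h2 ω) (prob_nonneg m ω)
          _ = 1 := by simp only [mul_one]; exact prob_sum m
          _ = ∑ k : Fin (m + 1), 1 / ((m : ℝ) + 1) * payoff m i k := by
              have : (m : ℝ) + 1 ≠ 0 := by positivity
              simp [payoff, this]
          _ = ∑ ω : ∀ i, Fin ((profile m).K i),
                (profile m).prob ω * payoff m i (ω 0) :=
              (exp_coord m (payoff m i)).symm
          _ ≤ _ := Finset.sum_le_sum fun ω _ =>
                mul_le_mul_of_nonneg_left (h1 ω) (prob_nonneg m ω)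
      · -- the deviation spends the whole budget on item `0`: it is the equilibrium bid
        have hs := Fin.sum_univ_succ b'
        rw [hs] at hsum
        have hnn : ∀ j : Fin m, 0 ≤ b' j.succ := fun j => hb _
        have hge : 0 ≤ ∑ j : Fin m, b' j.succ := Finset.sum_nonneg fun j _ => hnn j
        have hz : ∑ j : Fin m, b' j.succ = 0 := by linarith
        have hb1 : b' 0 = 1 := by linarith
        have hz' : ∀ j : Fin m, b' j.succ = 0 := fun j =>
          (Finset.sum_eq_zero_iff_of_nonneg (fun j _ => hnn j)).mp hz j (Finset.mem_univ j)
        have hup : ∀ ω, Function.update ((profile m).bids ω) i b' = (profile m).bids ω := by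
          intro ω
          rw [Function.update_eq_self_iff]
          funext j
          refine Fin.cases ?_ (fun j => ?_) j
          · rw [hb1, bid_zero_item m ω i hi]
          · rw [hz' j]
            simp [MixedProfile.bids, profile, Fin.succ_ne_zero]
        simp only [hup]
        exact le_rfl

/-- Non-degenerate form of the theorem: the equilibrium found has positive Liquid Welfare. -/
theorem main (n : ℕ) (hn : 5 ≤ n) :
    ∃ (A : DetAuction n n) (σ : MixedProfile n n),
      IsMixedNash A σ ∧ 0 < LW A σ ∧
      ∃ alloc : Fin n → Fin n,
        ((n : ℝ) / 2) * LW A σ ≤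
          ∑ i, min (∑ j ∈ univ.filter (fun j => alloc j = i), A.v i j) (A.B i) := by
  obtain ⟨m, rfl⟩ : ∃ m, n = m + 1 := ⟨n - 1, by omega⟩
  have hm : 2 ≤ m := by omega
  refine ⟨auction m, profile m, nash m hm, by rw [LW_eq m hm]; exact one_pos, id, ?_⟩
  rw [LW_eq m hm]
  have hr : ∑ i, min (∑ j ∈ univ.filter (fun j : Fin (m + 1) => id j = i), (auction m).v i j)
      ((auction m).B i) = (m : ℝ) := by
    simp only [id, Finset.filter_eq', Finset.mem_univ, if_true, Finset.sum_singleton]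
    rw [Fin.sum_univ_succ]
    simp [auction, Fin.succ_ne_zero]
  rw [hr]
  have : (2 : ℝ) ≤ m := by exact_mod_cast hm
  push_cast
  linarith

end LPoA

/-- **Deterministic tie-breaking, mixed equilibria, `Ω(n)` lower bound**:
for every `n ≥ 5` there are a simultaneous first price auction with `n` bidders
and `n` indivisible items (additive valuations, budgets, deterministic
tie-breaking) and a mixed Nash equilibrium `σ` such that some allocation has
Liquid Welfare at least `(n/2) · LW(σ)`, i.e. `OPT ≥ (n/2) · LW(σ)`. -/
theorem deterministic_tiebreak_mixed_lpoa_linear (n : ℕ) (hn : 5 ≤ n) :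
    ∃ (A : DetAuction n n) (σ : MixedProfile n n),
      IsMixedNash A σ ∧
      ∃ alloc : Fin n → Fin n,
        ((n : ℝ) / 2) * LW A σ ≤
          ∑ i, min (∑ j ∈ univ.filter (fun j => alloc j = i), A.v i j) (A.B i) := by
  obtain ⟨A, σ, h1, _, h2⟩ := LPoA.main n hn
  exact ⟨A, σ, h1, h2⟩
end

section
/- For all integers n ≥ 2 and 1 ≤ h ≤ n there exist a share-model simultaneous first price auction with n additive budgeted bidders in which every item has h identical shares, equipped with a randomized tie-breaking rule, and a pure-strategy Nash equilibrium b (no bidder can increase her expected utility, over the tie-breaking randomness, by any deviation whose bids sum to at most her budget), such that OPT ≥ (n/h) · LW(b); that is, with a randomized tie-breaking rule the Liquid Price of Anarchy over pure strategies is Ω(n/h) when items have h shares. -/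
/-!
With a randomized tie-breaking rule, there are share-model simultaneous first
price auctions (each item divided into `h` identical shares) with a pure
Nash equilibrium `b` such that `OPT ≥ (n/h) · LW(b)`: the Liquid Price of
Anarchy over pure strategies is `Ω(n/h)`.
-/

open Finset

/-- A (possibly randomized) allocation rule for a share-model simultaneous first
price auction with goods `Fin m × Fin h` (share `ℓ` of item `j` is `(j, ℓ)`):
`q c` is a finitely supported probability distribution over partial allocations.
Any supported allocation awards each share with a positive bid to a bidder with
the highest bid on it and leaves shares with all-zero bids unallocated. -/
structure RandShareRule (n m h : ℕ) where
  q : (Fin n → Fin m × Fin h → ℝ) → (Fin m × Fin h → Option (Fin n)) → ℝ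
  q_nonneg : ∀ c a, 0 ≤ q c a
  q_sum : ∀ c, ∑ a : Fin m × Fin h → Option (Fin n), q c a = 1
  supp_max : ∀ c a, q c a ≠ 0 → ∀ (g : Fin m × Fin h) (i : Fin n), a g = some i →
    ∀ k, c k g ≤ c i g
  supp_pos : ∀ c a, q c a ≠ 0 → ∀ g : Fin m × Fin h, (∃ i, 0 < c i g) → (a g).isSome
  supp_zero : ∀ c a, q c a ≠ 0 → ∀ g : Fin m × Fin h, (∀ i, c i g = 0) → a g = none

/-- Expected (first price) utility of bidder `i` with additive item values
`v i j` (a share of item `j` is worth `v i j / h`) under bid profile `c`,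
over the tie-breaking randomness. -/
noncomputable def EU {n m h : ℕ} (R : RandShareRule n m h) (v : Fin n → Fin m → ℝ)
    (i : Fin n) (c : Fin n → Fin m × Fin h → ℝ) : ℝ :=
  ∑ a : Fin m × Fin h → Option (Fin n), R.q c a *
    ∑ g : Fin m × Fin h, if a g = some i then v i g.1 / h - c i g else 0

/-- Expected Liquid Welfare of bid profile `c` over the tie-breaking randomness. -/
noncomputable def LWs {n m h : ℕ} (R : RandShareRule n m h) (v : Fin n → Fin m → ℝ)
    (B : Fin n → ℝ) (c : Fin n → Fin m × Fin h → ℝ) : ℝ :=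
  ∑ i : Fin n, ∑ a : Fin m × Fin h → Option (Fin n),
    R.q c a * min (∑ g : Fin m × Fin h, if a g = some i then v i g.1 / h else 0) (B i)


namespace ShareLPoA

/-- There is a lowest-index maximizer. -/
lemma exists_lowest {n : ℕ} (hn : 0 < n) (f : Fin n → ℝ) :
    ∃ i, (∀ j, f j ≤ f i) ∧ ∀ k, (∀ j, f j ≤ f k) → i ≤ k := by
  classical
  haveI : Nonempty (Fin n) := ⟨⟨0, hn⟩⟩
  obtain ⟨x, hx⟩ := Finite.exists_max f
  have hne : (univ.filter (fun k => ∀ j, f j ≤ f k)).Nonempty := ⟨x, by simpa using hx⟩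
  refine ⟨(univ.filter (fun k => ∀ j, f j ≤ f k)).min' hne, ?_, ?_⟩
  · have := Finset.min'_mem _ hne
    simpa using this
  · intro k hk
    exact Finset.min'_le _ _ (by simpa using hk)

/-- The lowest-index maximizer of `f`. -/
noncomputable def lowest {n : ℕ} (hn : 0 < n) (f : Fin n → ℝ) : Fin n :=
  Classical.choose (exists_lowest hn f)

lemma lowest_max {n : ℕ} (hn : 0 < n) (f : Fin n → ℝ) (j : Fin n) : f j ≤ f (lowest hn f) :=
  (Classical.choose_spec (exists_lowest hn f)).1 j

lemma lowest_le {n : ℕ} (hn : 0 < n) (f : Fin n → ℝ) (k : Fin n) (hk : ∀ j, f j ≤ f k) :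
    lowest hn f ≤ k :=
  (Classical.choose_spec (exists_lowest hn f)).2 k hk

open Classical in
/-- The allocation when bidder `k` has priority: every share goes to `k` if she is among the
highest bidders, and otherwise to the highest bidder of lowest index. -/
noncomputable def award {n m h : ℕ} (hn : 0 < n) (c : Fin n → Fin m × Fin h → ℝ) (k : Fin n)
    (g : Fin m × Fin h) : Option (Fin n) :=
  if ∀ i, c i g = 0 then none
  else if ∀ j, c j g ≤ c k g then some k else some (lowest hn (fun i => c i g))

lemma award_max {n m h : ℕ} (hn : 0 < n) (c : Fin n → Fin m × Fin h → ℝ) (k : Fin n)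
    (g : Fin m × Fin h) (i : Fin n) (ha : award hn c k g = some i) (j : Fin n) :
    c j g ≤ c i g := by
  unfold award at ha
  split_ifs at ha with h1 h2
  · cases ha; exact h2 j
  · cases ha; exact lowest_max hn (fun i => c i g) j

lemma award_nonzero {n m h : ℕ} (hn : 0 < n) (c : Fin n → Fin m × Fin h → ℝ) (k : Fin n)
    (g : Fin m × Fin h) (i : Fin n) (ha : award hn c k g = some i) : ∃ j, c j g ≠ 0 := by
  unfold award at ha
  split_ifs at ha with h1 h2
  · exact not_forall.1 h1
  · exact not_forall.1 h1

lemma award_other {n m h : ℕ} (hn : 0 < n) (c : Fin n → Fin m × Fin h → ℝ) (k : Fin n)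
    (g : Fin m × Fin h) (i : Fin n) (ha : award hn c k g = some i) (hk : k ≠ i) (l : Fin n)
    (hl : ∀ j, c j g ≤ c l g) : i ≤ l := by
  unfold award at ha
  split_ifs at ha with h1 h2
  · cases ha; exact absurd rfl hk
  · cases ha; exact lowest_le hn (fun i => c i g) l hl

open Classical in
/-- The randomized rule: a uniformly random bidder gets priority. -/
noncomputable def rule {n : ℕ} (m h : ℕ) (hn : 0 < n) : RandShareRule n m h where
  q c a := (1 / (n : ℝ)) * ∑ k : Fin n, if award hn c k = a then 1 else 0
  q_nonneg c a := by positivity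
  q_sum c := by
    rw [← Finset.mul_sum, Finset.sum_comm]
    have : (n : ℝ) ≠ 0 := by positivity
    simp [this]
  supp_max c a hq g i ha j := by
    obtain ⟨k, -, hk⟩ := Finset.exists_ne_zero_of_sum_ne_zero (right_ne_zero_of_mul hq)
    have hk' : award hn c k = a := by by_contra hne; simp [hne] at hk
    subst hk'
    exact award_max hn c k g i ha j
  supp_pos c a hq g hp := by
    obtain ⟨k, -, hk⟩ := Finset.exists_ne_zero_of_sum_ne_zero (right_ne_zero_of_mul hq)
    have hk' : award hn c k = a := by by_contra hne; simp [hne] at hk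
    subst hk'
    obtain ⟨i, hi⟩ := hp
    unfold award
    rw [if_neg (fun hall => hi.ne' (hall i))]
    split_ifs <;> rfl
  supp_zero c a hq g hz := by
    obtain ⟨k, -, hk⟩ := Finset.exists_ne_zero_of_sum_ne_zero (right_ne_zero_of_mul hq)
    have hk' : award hn c k = a := by by_contra hne; simp [hne] at hk
    subst hk'
    unfold award
    rw [if_pos hz]

lemma rule_expect {n m h : ℕ} (hn : 0 < n) (c : Fin n → Fin m × Fin h → ℝ)
    (F : (Fin m × Fin h → Option (Fin n)) → ℝ) :
    ∑ a, (rule m h hn).q c a * F a = (1 / (n : ℝ)) * ∑ k, F (award hn c k) := by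
  classical
  simp only [rule, mul_assoc, ← Finset.mul_sum, Finset.sum_mul]
  rw [Finset.sum_comm]
  congr 1
  refine Finset.sum_congr rfl fun k _ => ?_
  simp [ite_mul]

/-- Guards: bidders `0` and `1`, when there are at least two shares (`h = H + 1`). -/
def G (N H : ℕ) (i : Fin (N + 2)) : Prop := 1 ≤ H ∧ i.val < 2

open Classical in
/-- Values: item `0` is contested, item `i` is bidder `i`'s private item. -/
noncomputable def val (N H : ℕ) (i j : Fin (N + 2)) : ℝ :=
  if j = 0 then (if G N H i then ((H : ℝ) + 1) else ((H : ℝ) + 1) * ((N : ℝ) + 3))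
  else if j = i ∧ ¬ G N H i then 1 else 0

open Classical in
/-- Budgets. -/
noncomputable def bud (N H : ℕ) (i : Fin (N + 2)) : ℝ := if G N H i then (H : ℝ) + 1 else 1

open Classical in
/-- Equilibrium bids: guards bid `1` on all shares of item `0`, the others on its share `0`. -/
noncomputable def bid (N H : ℕ) (i : Fin (N + 2)) (g : Fin (N + 2) × Fin (H + 1)) : ℝ :=
  if g.1 = 0 ∧ (G N H i ∨ g.2 = 0) then 1 else 0

lemma val_nonneg (N H : ℕ) (i j : Fin (N + 2)) : 0 ≤ val N H i j := by
  unfold val; split_ifs <;> positivity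

lemma bid_nonneg (N H : ℕ) (i) (g) : 0 ≤ bid N H i g := by
  unfold bid; split_ifs <;> norm_num

lemma bid_sum (N H : ℕ) (i) : ∑ g, bid N H i g ≤ bud N H i := by
  classical
  rw [Fintype.sum_prod_type]
  by_cases hG : G N H i
  · simp [bid, bud, hG]
  · simp [bid, bud, hG, ite_and]

/-- Somebody else always bids `1` on every share of item `0`. -/
lemma exists_other (N H : ℕ) (i : Fin (N + 2)) (l : Fin (H + 1)) :
    ∃ j, j ≠ i ∧ bid N H j (0, l) = 1 := by
  have h01 : (0 : Fin (N + 2)) ≠ 1 := by simp [Fin.ext_iff]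
  have key : ∀ j : Fin (N + 2), j.val < 2 → bid N H j (0, l) = 1 := by
    intro j hj
    unfold bid
    rw [if_pos]
    refine ⟨rfl, ?_⟩
    by_cases hH : 1 ≤ H
    · exact Or.inl ⟨hH, hj⟩
    · right; ext; have := l.2; simp; omega
  by_cases hi : i = 0
  · exact ⟨1, by rw [hi]; exact h01.symm, key 1 (by simp)⟩
  · exact ⟨0, fun h => hi h.symm, key 0 (by simp)⟩

lemma bid_cold (N H : ℕ) (i) (g : Fin (N + 2) × Fin (H + 1)) (hg : g.1 ≠ 0) :
    bid N H i g = 0 := by simp [bid, hg]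

/-- A deviator who wins a share of item `0` bids at least `1` on it. -/
lemma hot_win (N H : ℕ) (hn : 0 < N + 2) (i : Fin (N + 2)) (c' : Fin (N + 2) × Fin (H + 1) → ℝ)
    (k : Fin (N + 2)) (g : Fin (N + 2) × Fin (H + 1)) (hg : g.1 = 0)
    (ha : award hn (Function.update (bid N H) i c') k g = some i) : 1 ≤ c' g := by
  obtain ⟨j, hj, hb⟩ := exists_other N H i g.2
  have := award_max hn _ k g i ha j
  rw [Function.update_of_ne hj, Function.update_self] at this
  have hg' : g = (0, g.2) := Prod.ext hg rfl
  rw [hg'] at this ⊢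
  linarith

/-- A deviator who bids `0` wins nothing. -/
lemma zero_loses (N H : ℕ) (hn : 0 < N + 2) (i : Fin (N + 2))
    (c' : Fin (N + 2) × Fin (H + 1) → ℝ) (k : Fin (N + 2)) (g : Fin (N + 2) × Fin (H + 1))
    (hz : c' g = 0) : award hn (Function.update (bid N H) i c') k g ≠ some i := by
  intro ha
  by_cases hg : g.1 = 0
  · have := hot_win N H hn i c' k g hg ha
    linarith
  · obtain ⟨j, hj⟩ := award_nonzero hn _ k g i ha
    apply hj
    by_cases hji : j = i
    · subst hji; simpa using hz
    · rw [Function.update_of_ne hji]; exact bid_cold N H j g hg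

/-- Realized utility. -/
noncomputable def util (N H : ℕ) (hn : 0 < N + 2) (i : Fin (N + 2))
    (c : Fin (N + 2) → Fin (N + 2) × Fin (H + 1) → ℝ) (k : Fin (N + 2)) : ℝ :=
  ∑ g, if award hn c k g = some i then val N H i g.1 / ((H + 1 : ℕ) : ℝ) - c i g else 0

lemma EU_eq (N H : ℕ) (hn : 0 < N + 2) (i : Fin (N + 2)) (c) :
    EU (rule (N + 2) (H + 1) hn) (val N H) i c
      = (1 / ((N + 2 : ℕ) : ℝ)) * ∑ k, util N H hn i c k := by
  unfold EU
  rw [rule_expect hn c (fun a => ∑ g, if a g = some i then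
    val N H i g.1 / ((H + 1 : ℕ) : ℝ) - c i g else 0)]
  rfl

lemma val_hot_guard (N H : ℕ) (i) (hG : G N H i) : val N H i 0 / ((H + 1 : ℕ) : ℝ) = 1 := by
  have : (H : ℝ) + 1 ≠ 0 := by positivity
  simp [val, hG, this]

lemma val_hot_normal (N H : ℕ) (i) (hG : ¬ G N H i) :
    val N H i 0 / ((H + 1 : ℕ) : ℝ) = (N : ℝ) + 3 := by
  have : (H : ℝ) + 1 ≠ 0 := by positivity
  simp [val, hG]; field_simp

lemma val_hot_ge (N H : ℕ) (i) : 1 ≤ val N H i 0 / ((H + 1 : ℕ) : ℝ) := by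
  by_cases hG : G N H i
  · rw [val_hot_guard N H i hG]
  · rw [val_hot_normal N H i hG]
    have : (0 : ℝ) ≤ N := by positivity
    linarith

lemma bid_le_val (N H : ℕ) (i) (g : Fin (N + 2) × Fin (H + 1)) :
    0 ≤ val N H i g.1 / ((H + 1 : ℕ) : ℝ) - bid N H i g := by
  by_cases hg : g.1 = 0
  · have h1 := val_hot_ge N H i
    rw [hg]
    have : bid N H i g ≤ 1 := by unfold bid; split_ifs <;> norm_num
    linarith
  · rw [bid_cold N H i g hg]
    have := val_nonneg N H i g.1
    simp only [sub_zero]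
    positivity

lemma term_nonneg (N H : ℕ) (hn : 0 < N + 2) (i k : Fin (N + 2))
    (g : Fin (N + 2) × Fin (H + 1)) :
    0 ≤ if award hn (bid N H) k g = some i then
      val N H i g.1 / ((H + 1 : ℕ) : ℝ) - bid N H i g else 0 := by
  split_ifs
  · exact bid_le_val N H i g
  · exact le_rfl

lemma util_nonneg (N H : ℕ) (hn : 0 < N + 2) (i k : Fin (N + 2)) :
    0 ≤ util N H hn i (bid N H) k :=
  Finset.sum_nonneg fun g _ => term_nonneg N H hn i k g

lemma bid_zero (N H : ℕ) (j) : bid N H j (0, 0) = 1 := by simp [bid]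

lemma award_zero (N H : ℕ) (hn : 0 < N + 2) (i : Fin (N + 2)) :
    award hn (bid N H) i (0, 0) = some i := by
  simp [award, bid_zero]

lemma util_eq_normal (N H : ℕ) (hn : 0 < N + 2) (i : Fin (N + 2)) (hG : ¬ G N H i) :
    (N : ℝ) + 2 ≤ ∑ k, util N H hn i (bid N H) k := by
  have h1 : util N H hn i (bid N H) i ≤ ∑ k, util N H hn i (bid N H) k :=
    Finset.single_le_sum (fun k _ => util_nonneg N H hn i k) (Finset.mem_univ i)
  have h2 := Finset.single_le_sum (fun g _ => term_nonneg N H hn i i g)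
    (Finset.mem_univ ((0, 0) : Fin (N + 2) × Fin (H + 1)))
  rw [award_zero, if_pos rfl, bid_zero, val_hot_normal N H i hG] at h2
  unfold util at h1
  unfold util
  linarith

lemma util_dev_guard (N H : ℕ) (hn : 0 < N + 2) (i k : Fin (N + 2)) (hG : G N H i)
    (c' : Fin (N + 2) × Fin (H + 1) → ℝ) (hc : ∀ g, 0 ≤ c' g) :
    util N H hn i (Function.update (bid N H) i c') k ≤ 0 := by
  refine Finset.sum_nonpos fun g _ => ?_
  split_ifs with ha
  · rw [Function.update_self]
    by_cases hg : g.1 = 0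
    · have := hot_win N H hn i c' k g hg ha
      rw [hg, val_hot_guard N H i hG]
      linarith
    · have : val N H i g.1 = 0 := by simp [val, hg, hG]
      rw [this]
      have := hc g
      simp only [zero_div]
      linarith
  · exact le_rfl

/-- Deviations giving up on item `0`. -/
lemma util_dev_cold (N H : ℕ) (hn : 0 < N + 2) (i k : Fin (N + 2))
    (c' : Fin (N + 2) × Fin (H + 1) → ℝ) (hc : ∀ g, 0 ≤ c' g)
    (hlow : ∀ g, g.1 = 0 → c' g < 1) :
    util N H hn i (Function.update (bid N H) i c') k ≤ 1 := by
  classical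
  have hpos : (0 : ℝ) < ((H + 1 : ℕ) : ℝ) := by positivity
  calc util N H hn i (Function.update (bid N H) i c') k
      ≤ ∑ g : Fin (N + 2) × Fin (H + 1), if g.1 = i then 1 / ((H + 1 : ℕ) : ℝ) else 0 := by
        refine Finset.sum_le_sum fun g _ => ?_
        split_ifs with ha hgi hgi
        · rw [Function.update_self]
          have hg : g.1 ≠ 0 := fun hg =>
            absurd (hot_win N H hn i c' k g hg ha) (not_le.2 (hlow g hg))
          have hv : val N H i g.1 ≤ 1 := by
            unfold val; rw [if_neg hg]; split_ifs <;> norm_num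
          have := div_le_div_of_nonneg_right hv hpos.le
          have := hc g
          linarith
        · rw [Function.update_self]
          have hg : g.1 ≠ 0 := fun hg =>
            absurd (hot_win N H hn i c' k g hg ha) (not_le.2 (hlow g hg))
          have hv : val N H i g.1 = 0 := by simp [val, hg, hgi]
          rw [hv]
          have := hc g
          simp only [zero_div]
          linarith
        · positivity
        · exact le_rfl
    _ = 1 := by
        rw [Fintype.sum_prod_type]
        have : (H : ℝ) + 1 ≠ 0 := by positivity
        simp [Finset.sum_ite_irrel, this]

/-- Deviations putting the whole budget on one share of item `0`. -/
lemma util_dev_hot (N H : ℕ) (hn : 0 < N + 2) (i k : Fin (N + 2)) (hG : ¬ G N H i) (hH : 1 ≤ H)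
    (c' : Fin (N + 2) × Fin (H + 1) → ℝ) (g₀ : Fin (N + 2) × Fin (H + 1)) (hg₀ : g₀.1 = 0)
    (h1 : c' g₀ = 1) (h0 : ∀ g, g ≠ g₀ → c' g = 0) :
    util N H hn i (Function.update (bid N H) i c') k ≤ if k = i then (N : ℝ) + 2 else 0 := by
  classical
  unfold util
  rw [Finset.sum_eq_single g₀ (fun g _ hg => if_neg (zero_loses N H hn i c' k g (h0 g hg)))
    (by simp)]
  have hi2 : 2 ≤ i.val := by
    by_contra hlt
    exact hG ⟨hH, by omega⟩
  split_ifs with ha hk hk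
  · rw [Function.update_self, h1, hg₀, val_hot_normal N H i hG]
    linarith
  · exfalso
    have hle : i ≤ 0 := by
      refine award_other hn _ k g₀ i ha hk 0 fun j => ?_
      have h0i : (0 : Fin (N + 2)) ≠ i := by
        intro h; rw [← h] at hi2; simp at hi2
      have hb0 : bid N H 0 g₀ = 1 := by
        unfold bid
        exact if_pos ⟨hg₀, Or.inl ⟨hH, by simp⟩⟩
      rw [Function.update_of_ne h0i, hb0]
      by_cases hji : j = i
      · subst hji; rw [Function.update_self, h1]
      · rw [Function.update_of_ne hji]
        unfold bid; split_ifs <;> norm_num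
    have : i.val ≤ 0 := hle
    omega
  · positivity
  · exact le_rfl

lemma nash (N H : ℕ) (hn : 0 < N + 2) (i : Fin (N + 2)) (c' : Fin (N + 2) × Fin (H + 1) → ℝ)
    (hc : ∀ g, 0 ≤ c' g) (hB : ∑ g, c' g ≤ bud N H i) :
    EU (rule (N + 2) (H + 1) hn) (val N H) i (Function.update (bid N H) i c')
      ≤ EU (rule (N + 2) (H + 1) hn) (val N H) i (bid N H) := by
  classical
  rw [EU_eq, EU_eq]
  by_cases hself : c' = bid N H i
  · rw [hself, Function.update_eq_self]
  refine mul_le_mul_of_nonneg_left ?_ (by positivity)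
  by_cases hG : G N H i
  · exact (Finset.sum_nonpos fun k _ => util_dev_guard N H hn i k hG c' hc).trans
      (Finset.sum_nonneg fun k _ => util_nonneg N H hn i k)
  · refine le_trans ?_ (util_eq_normal N H hn i hG)
    by_cases hlow : ∀ g, g.1 = 0 → c' g < 1
    · refine (Finset.sum_le_sum fun k _ => util_dev_cold N H hn i k c' hc hlow).trans ?_
      simp
    · push Not at hlow
      obtain ⟨g₀, hg₀, hge⟩ := hlow
      have hB1 : ∑ g, c' g ≤ 1 := by simpa [bud, hG] using hB
      have hsplit := Finset.add_sum_erase univ c' (Finset.mem_univ g₀)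
      have hrest : 0 ≤ ∑ g ∈ univ.erase g₀, c' g := Finset.sum_nonneg fun g _ => hc g
      have h1 : c' g₀ = 1 := by linarith
      have hz : ∑ g ∈ univ.erase g₀, c' g = 0 := by linarith
      have h0 : ∀ g, g ≠ g₀ → c' g = 0 := fun g hg =>
        (Finset.sum_eq_zero_iff_of_nonneg (fun g _ => hc g)).1 hz g (by simp [hg])
      by_cases hH : 1 ≤ H
      · refine (Finset.sum_le_sum fun k _ =>
          util_dev_hot N H hn i k hG hH c' g₀ hg₀ h1 h0).trans ?_
        simp
      · exfalso
        apply hself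
        have hl : ∀ l : Fin (H + 1), l = 0 := fun l => by
          ext; have := l.2; simp; omega
        funext g
        by_cases hg : g = g₀
        · subst hg; rw [h1]; simp [bid, hg₀, hl g.2]
        · rw [h0 g hg, bid_cold]
          intro hg1
          exact hg (Prod.ext (hg1.trans hg₀.symm) ((hl _).trans (hl _).symm))

/-- Realized liquid welfare is at most `h`. -/
lemma lw_le (N H : ℕ) (hn : 0 < N + 2) (k : Fin (N + 2)) :
    ∑ i, min (∑ g, if award hn (bid N H) k g = some i then
      val N H i g.1 / ((H + 1 : ℕ) : ℝ) else 0) (bud N H i) ≤ (H : ℝ) + 1 := by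
  classical
  have hcold : ∀ i (g : Fin (N + 2) × Fin (H + 1)), award hn (bid N H) k g = some i → g.1 = 0 := by
    intro i g ha
    by_contra hg
    obtain ⟨j, hj⟩ := award_nonzero hn _ k g i ha
    exact hj (bid_cold N H j g hg)
  calc _ ≤ ∑ i, ∑ l : Fin (H + 1), (if award hn (bid N H) k (0, l) = some i then (1 : ℝ) else 0) := by
        refine Finset.sum_le_sum fun i _ => ?_
        by_cases hG : G N H i
        · refine (min_le_left _ _).trans ?_
          rw [Fintype.sum_prod_type, Finset.sum_eq_single 0]
          · simp only [val_hot_guard N H i hG]; exact le_rfl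
          · intro j _ hj
            exact Finset.sum_eq_zero fun l _ => if_neg fun ha => hj (hcold i _ ha)
          · simp
        · by_cases hw : ∃ g, award hn (bid N H) k g = some i
          · obtain ⟨g, hg⟩ := hw
            refine (min_le_right _ _).trans ?_
            have hg' : g = (0, g.2) := Prod.ext (hcold i g hg) rfl
            rw [hg'] at hg
            have := Finset.single_le_sum
              (f := fun l : Fin (H + 1) =>
                if award hn (bid N H) k (0, l) = some i then (1 : ℝ) else 0)
              (fun l _ => by split_ifs <;> norm_num) (Finset.mem_univ g.2)
            simp only [hg, if_true] at this
            simpa [bud, hG] using this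
          · push Not at hw
            refine (min_le_left _ _).trans ?_
            simp [hw]
    _ ≤ (H : ℝ) + 1 := by
        rw [Finset.sum_comm]
        have : ∀ l : Fin (H + 1), ∑ i,
            (if award hn (bid N H) k (0, l) = some i then (1 : ℝ) else 0) ≤ 1 := by
          intro l
          rcases award hn (bid N H) k (0, l) with _ | j
          · simp
          · simp
        refine (Finset.sum_le_sum fun l _ => this l).trans ?_
        simp

lemma LW_eq (N H : ℕ) (hn : 0 < N + 2) :
    LWs (rule (N + 2) (H + 1) hn) (val N H) (bud N H) (bid N H)
      = (1 / ((N + 2 : ℕ) : ℝ)) * ∑ k, ∑ i,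
        min (∑ g, if award hn (bid N H) k g = some i then
          val N H i g.1 / ((H + 1 : ℕ) : ℝ) else 0) (bud N H i) := by
  unfold LWs
  rw [Finset.sum_comm]
  simp only [← Finset.mul_sum]
  rw [rule_expect hn (bid N H) (fun a => ∑ i, min (∑ g, if a g = some i then
          val N H i g.1 / ((H + 1 : ℕ) : ℝ) else 0) (bud N H i))]

lemma LW_le (N H : ℕ) (hn : 0 < N + 2) :
    LWs (rule (N + 2) (H + 1) hn) (val N H) (bud N H) (bid N H) ≤ (H : ℝ) + 1 := by
  rw [LW_eq]
  have := Finset.sum_le_sum fun k (_ : k ∈ (univ : Finset (Fin (N + 2)))) => lw_le N H hn k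
  rw [Finset.sum_const, Finset.card_univ, Fintype.card_fin, nsmul_eq_mul] at this
  have hp : (0 : ℝ) < ((N + 2 : ℕ) : ℝ) := by positivity
  rw [one_div, inv_mul_le_iff₀ hp]
  exact this

lemma bud_pos (N H : ℕ) (i) : 0 < bud N H i := by unfold bud; split_ifs <;> positivity

/-- The instance is not degenerate: the equilibrium has positive liquid welfare. -/
lemma LW_pos (N H : ℕ) (hn : 0 < N + 2) :
    0 < LWs (rule (N + 2) (H + 1) hn) (val N H) (bud N H) (bid N H) := by
  rw [LW_eq]
  refine mul_pos (by positivity) ?_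
  have ht : ∀ i k (g : Fin (N + 2) × Fin (H + 1)), 0 ≤ if award hn (bid N H) k g = some i then
      val N H i g.1 / ((H + 1 : ℕ) : ℝ) else 0 := by
    intro i k g
    have := val_nonneg N H i g.1
    split_ifs <;> positivity
  refine Finset.sum_pos (fun k _ => ?_) Finset.univ_nonempty
  refine Finset.sum_pos' (fun i _ => le_min (Finset.sum_nonneg fun g _ => ht i k g)
    (bud_pos N H i).le) ⟨k, Finset.mem_univ k, lt_min ?_ (bud_pos N H k)⟩
  have h2 := Finset.single_le_sum (fun g _ => ht k k g)
    (Finset.mem_univ ((0, 0) : Fin (N + 2) × Fin (H + 1)))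
  rw [award_zero, if_pos rfl] at h2
  exact lt_of_lt_of_le (lt_of_lt_of_le one_pos (val_hot_ge N H k)) h2

open Classical in
/-- A good allocation. -/
noncomputable def alloc (N H : ℕ) (g : Fin (N + 2) × Fin (H + 1)) : Fin (N + 2) :=
  if G N H g.1 then 0 else g.1

/-- Each bidder `i` receives all shares of an item `j` allotted to her. -/
lemma item_le (N H : ℕ) (i j : Fin (N + 2)) (ha : ∀ l, alloc N H (j, l) = i) :
    val N H i j ≤
      ∑ g ∈ univ.filter (fun g => alloc N H g = i), val N H i g.1 / ((H + 1 : ℕ) : ℝ) := by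
  classical
  have hp : (0 : ℝ) < ((H + 1 : ℕ) : ℝ) := by positivity
  rw [Finset.sum_filter, Fintype.sum_prod_type]
  have h1 := Finset.single_le_sum (f := fun j => ∑ l : Fin (H + 1),
    if alloc N H (j, l) = i then val N H i j / ((H + 1 : ℕ) : ℝ) else 0)
    (fun j _ => Finset.sum_nonneg fun l _ => by
      have := val_nonneg N H i j
      split_ifs <;> positivity) (Finset.mem_univ j)
  refine le_trans (le_of_eq ?_) h1
  simp only [ha, if_true, Finset.sum_const, Finset.card_univ, Fintype.card_fin, nsmul_eq_mul]
  field_simp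

lemma opt_ge (N H : ℕ) :
    (N : ℝ) + 2 ≤ ∑ i, min (∑ g ∈ univ.filter (fun g => alloc N H g = i),
      val N H i g.1 / ((H + 1 : ℕ) : ℝ)) (bud N H i) := by
  classical
  have hH0 : (0 : ℝ) ≤ H := by positivity
  have hN0 : (0 : ℝ) ≤ N := by positivity
  have h10 : (1 : Fin (N + 2)) ≠ 0 := by simp [Fin.ext_iff]
  calc (N : ℝ) + 2 = ∑ i : Fin (N + 2),
        (1 + (if i = 0 then (H : ℝ) else 0) - (if i = 1 then (H : ℝ) else 0)) := by
        rw [Finset.sum_sub_distrib, Finset.sum_add_distrib]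
        simp
    _ ≤ _ := by
        refine Finset.sum_le_sum fun i _ => ?_
        by_cases hG : G N H i
        · by_cases hi : i = 0
          · subst hi
            rw [if_pos rfl, if_neg h10.symm]
            refine le_min (le_trans ?_ (item_le N H 0 0 fun l => by simp [alloc])) ?_
            · simp [val, hG, add_comm]
            · simp [bud, hG, add_comm]
          · have hi1 : i = 1 := by
              have h2 := hG.2
              have : i.val ≠ 0 := fun h => hi (Fin.ext h)
              ext; simp; omega
            subst hi1
            rw [if_neg hi, if_pos rfl]
            have hH1 : (1 : ℝ) ≤ H := by exact_mod_cast hG.1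
            refine le_trans (by linarith : _ ≤ (0 : ℝ)) (le_min ?_ (bud_pos N H 1).le)
            refine Finset.sum_nonneg fun g _ => ?_
            have := val_nonneg N H 1 g.1
            positivity
        · have hle : 1 + (if i = 0 then (H : ℝ) else 0) - (if i = 1 then (H : ℝ) else 0) ≤ 1 := by
            by_cases hi : i = 0
            · have hHz : H = 0 := by
                by_contra hne
                exact hG ⟨by omega, by simp [hi]⟩
              simp [hHz]
            · rw [if_neg hi]; split_ifs <;> linarith
          refine le_trans hle (le_min (le_trans ?_ (item_le N H i i fun l => by simp [alloc, hG])) ?_)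
          · by_cases hi : i = 0
            · subst hi
              simp only [val, hG, if_true, if_false]
              nlinarith [mul_nonneg hH0 hN0]
            · simp [val, hG, hi]
          · simp [bud, hG]

/-- A version with the additional information that the equilibrium liquid welfare is positive,
so that the lower bound on the Liquid Price of Anarchy is genuine. -/
theorem strong (n h : ℕ) (hn : 2 ≤ n) (hh : 1 ≤ h) :
    ∃ (m : ℕ) (v : Fin n → Fin m → ℝ) (B : Fin n → ℝ)
      (R : RandShareRule n m h) (b : Fin n → Fin m × Fin h → ℝ),
      (∀ i j, 0 ≤ v i j) ∧ (∀ i, 0 ≤ B i) ∧ (∀ i g, 0 ≤ b i g) ∧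
      (∀ i, (∑ g : Fin m × Fin h, b i g) ≤ B i) ∧
      (∀ i (c' : Fin m × Fin h → ℝ), (∀ g, 0 ≤ c' g) →
        (∑ g : Fin m × Fin h, c' g) ≤ B i →
        EU R v i (Function.update b i c') ≤ EU R v i b) ∧
      0 < LWs R v B b ∧
      ∃ alloc : Fin m × Fin h → Fin n,
        ((n : ℝ) / h) * LWs R v B b ≤
          ∑ i, min (∑ g ∈ univ.filter (fun g => alloc g = i), v i g.1 / h) (B i) := by
  obtain ⟨N, rfl⟩ := Nat.exists_eq_add_of_le' hn
  obtain ⟨H, rfl⟩ := Nat.exists_eq_add_of_le' hh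
  have hp : 0 < N + 2 := by omega
  refine ⟨N + 2, val N H, bud N H, rule (N + 2) (H + 1) hp, bid N H, val_nonneg N H,
    fun i => (bud_pos N H i).le, bid_nonneg N H, bid_sum N H, nash N H hp, LW_pos N H hp,
    alloc N H, le_trans ?_ (opt_ge N H)⟩
  have hHp : (0 : ℝ) < (H : ℝ) + 1 := by positivity
  calc (((N + 2 : ℕ) : ℝ) / ((H + 1 : ℕ) : ℝ)) * _
      ≤ (((N + 2 : ℕ) : ℝ) / ((H + 1 : ℕ) : ℝ)) * ((H : ℝ) + 1) :=
        mul_le_mul_of_nonneg_left (LW_le N H hp) (by positivity)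
    _ = (N : ℝ) + 2 := by push_cast; field_simp

end ShareLPoA

/-- **Randomized tie-breaking, shares, `Ω(n/h)` lower bound**: for all `n ≥ 2`
and `1 ≤ h ≤ n` there are a share-model simultaneous first price auction with
`n` additive budgeted bidders, every item having `h` shares, a randomized
tie-breaking allocation rule, and a pure bid profile `b` which is a Nash
equilibrium in expectation, such that some allocation of the shares has Liquid
Welfare at least `(n/h) · LW(b)`, i.e. `OPT ≥ (n/h) · LW(b)`. -/
theorem randomized_tiebreak_shares_lpoa (n h : ℕ) (hn : 2 ≤ n) (hh : 1 ≤ h)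
    (hhn : h ≤ n) :
    ∃ (m : ℕ) (v : Fin n → Fin m → ℝ) (B : Fin n → ℝ)
      (R : RandShareRule n m h) (b : Fin n → Fin m × Fin h → ℝ),
      (∀ i j, 0 ≤ v i j) ∧ (∀ i, 0 ≤ B i) ∧ (∀ i g, 0 ≤ b i g) ∧
      (∀ i, (∑ g : Fin m × Fin h, b i g) ≤ B i) ∧
      (∀ i (c' : Fin m × Fin h → ℝ), (∀ g, 0 ≤ c' g) →
        (∑ g : Fin m × Fin h, c' g) ≤ B i →
        EU R v i (Function.update b i c') ≤ EU R v i b) ∧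
      ∃ alloc : Fin m × Fin h → Fin n,
        ((n : ℝ) / h) * LWs R v B b ≤
          ∑ i, min (∑ g ∈ univ.filter (fun g => alloc g = i), v i g.1 / h) (B i) := by
  obtain ⟨m, v, B, R, b, h1, h2, h3, h4, h5, -, h6⟩ := ShareLPoA.strong n h hn hh
  exact ⟨m, v, B, R, b, h1, h2, h3, h4, h5, h6⟩
end
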